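/- Let L = 2π and φ(x) = (1 − cos x)/√(3π). Let y be a classical solution of the nonlinear KdV system on [0,T], and define p(t) = ∫₀^{2π} y(t,x) φ(x) dx. Then p is differentiable on (0,T) and p′(t) = (1/2) ∫₀^{2π} y(t,x)² φ′(x) dx for all t ∈ (0,T). -/

import Mathlib

open Set Real MeasureTheory

/-- The normalized kernel eigenfunction `φ(x) = (1 − cos x)/√(3π)` of the linear KdV
operator at the critical length `L = 2π`. -/
noncomputable def phiKdV (x : ℝ) : ℝ := (1 - Real.cos x) / Real.sqrt (3 * Real.pi)

/-- A classical solution of the nonlinear KdV system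
`y_t + y_x + y y_x + y_xxx = 0`, `y(t,0) = y(t,L) = y_x(t,L) = 0`, on `[0,T] × [0,L]`. -/
def IsNonlinearKdVSol (L T : ℝ) (y : ℝ → ℝ → ℝ) : Prop :=
  (∀ t ∈ Icc (0:ℝ) T, ContDiffOn ℝ 3 (y t) (Icc (0:ℝ) L)) ∧
  (∀ x ∈ Icc (0:ℝ) L, ContDiffOn ℝ 1 (fun s => y s x) (Icc (0:ℝ) T)) ∧
  ContinuousOn (fun p : ℝ × ℝ => y p.1 p.2) (Icc (0:ℝ) T ×ˢ Icc (0:ℝ) L) ∧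
  (∀ t ∈ Ioo (0:ℝ) T, ∀ x ∈ Ioo (0:ℝ) L,
    derivWithin (fun s => y s x) (Icc (0:ℝ) T) t
      + derivWithin (y t) (Icc (0:ℝ) L) x
      + y t x * derivWithin (y t) (Icc (0:ℝ) L) x
      + iteratedDerivWithin 3 (y t) (Icc (0:ℝ) L) x = 0) ∧
  (∀ t ∈ Icc (0:ℝ) T,
    y t 0 = 0 ∧ y t L = 0 ∧ derivWithin (y t) (Icc (0:ℝ) L) L = 0)

/-!
The time derivative `y_t` exists at each point but is not bounded uniformly in `x`, so `d/dt` cannot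
simply be moved under the integral sign. What replaces a bound is dissipativity: in `L²((1 + x) dx)`
two states with `|f|, |g| ≤ M` satisfy `⟪f - g, f_t - g_t⟫ ≤ C ‖f - g‖²`, because Kato's multiplier
`1 + x` makes the dispersion produce a term `-∫ (f_x - g_x)²` that absorbs the nonlinearity.

Near a time where `‖y_t‖` is locally bounded, Fatou's lemma turns the pointwise derivative into a
weak derivative in `L²`. There are no other times. The map `t ↦ ‖y_t‖` is lower semicontinuous by
Fatou's lemma, so by Baire's theorem it is bounded on some portion of the closed set of bad times.
In the gaps of that portion the increments `y (s + η) - y s` grow at most exponentially in `s` by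
dissipativity, so the bound extends to the gaps, and the portion was not bad after all.

The derivative of `∫ y φ` is thus the pairing of `y_t` with `φ / (1 + x)`, and integration by parts
moves the space derivatives onto `φ`, where `φ' + φ''' = 0` removes the linear terms.
-/

open Filter Topology
open scoped RealInnerProductSpace

lemma exists_eventually_le_of_lowerSemicontinuous {α : Type*} [TopologicalSpace α] [BaireSpace α]
    [Nonempty α] {f : α → ℝ} (hf : LowerSemicontinuous f) :
    ∃ x K, ∀ᶠ y in 𝓝 x, f y ≤ K := by
  obtain ⟨n, x, hx⟩ := nonempty_interior_of_iUnion_of_closed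
    (fun n : ℕ => hf.isClosed_preimage (n : ℝ)) (iUnion_eq_univ_iff.2 fun y => exists_nat_ge (f y))
  exact ⟨x, n, mem_interior_iff_mem_nhds.1 hx⟩

section Hilbert

variable {H : Type*} [NormedAddCommGroup H] [InnerProductSpace ℝ H]

/-- Weak differentiability of a curve in a Hilbert space. The bound on the difference quotients,
which the uniform boundedness principle would extract from the first field, is made part of the
definition. -/
structure HasWeakDerivAt (U : ℝ → H) (v : H) (t : ℝ) : Prop where
  hasDerivAt_inner : ∀ φ : H, HasDerivAt (fun s => ⟪φ, U s⟫) ⟪φ, v⟫ t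
  isBigO_sub : (fun s => U s - U t) =O[𝓝 t] fun s => s - t

namespace HasWeakDerivAt

variable {U W : ℝ → H} {v w : H} {t : ℝ}

lemma sub (hU : HasWeakDerivAt U v t) (hW : HasWeakDerivAt W w t) :
    HasWeakDerivAt (fun s => U s - W s) (v - w) t where
  hasDerivAt_inner φ := by
    simpa only [inner_sub_right] using (hU.hasDerivAt_inner φ).fun_sub (hW.hasDerivAt_inner φ)
  isBigO_sub := by
    simpa only [sub_sub_sub_comm] using hU.isBigO_sub.sub hW.isBigO_sub

lemma sub_const (hU : HasWeakDerivAt U v t) (c : H) : HasWeakDerivAt (fun s => U s - c) v t where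
  hasDerivAt_inner φ := by
    simpa only [inner_sub_right] using (hU.hasDerivAt_inner φ).sub_const ⟪φ, c⟫
  isBigO_sub := by simpa only [sub_sub_sub_cancel_right] using hU.isBigO_sub

lemma comp_add_const {η : ℝ} (hU : HasWeakDerivAt U v (t + η)) :
    HasWeakDerivAt (fun s => U (s + η)) v t where
  hasDerivAt_inner φ := (hU.hasDerivAt_inner φ).comp_add_const t η
  isBigO_sub := by
    have hshift : Tendsto (fun s => s + η) (𝓝 t) (𝓝 (t + η)) :=
      (continuous_add_const η).tendsto t
    simpa only [Function.comp_def, add_sub_add_right_eq_sub] using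
      hU.isBigO_sub.comp_tendsto hshift

lemma hasDerivAt_norm_sq (hU : HasWeakDerivAt U v t) :
    HasDerivAt (fun s => ‖U s‖ ^ 2) (2 * ⟪U t, v⟫) t := by
  have hquadratic : HasDerivAt (fun s => ‖U s - U t‖ ^ 2) 0 t := by
    rw [hasDerivAt_iff_isLittleO]
    have hsq : (fun s => ‖U s - U t‖ ^ 2) =o[𝓝 t] fun s => s - t :=
      (hU.isBigO_sub.norm_norm.pow 2).trans_isLittleO
        (Asymptotics.isLittleO_pow_sub_sub t one_lt_two)
    simpa using hsq
  have hexpand : (fun s => ‖U s‖ ^ 2) =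
      fun s => ‖U s - U t‖ ^ 2 + 2 * ⟪U t, U s⟫ - ‖U t‖ ^ 2 := by
    funext s
    rw [norm_sub_sq_real, real_inner_comm]
    ring
  rw [hexpand]
  simpa using (hquadratic.fun_add ((hU.hasDerivAt_inner (U t)).const_mul 2)).sub_const (‖U t‖ ^ 2)

lemma norm_le {K : ℝ} {l : Filter ℝ} [l.NeBot] (hl : l ≤ 𝓝[≠] t) (hU : HasWeakDerivAt U v t)
    (hK : ∀ᶠ s in l, ‖U s - U t‖ ≤ K * |s - t|) : ‖v‖ ≤ K := by
  have hne : ∀ᶠ s in l, 0 < |s - t| := by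
    filter_upwards [hl self_mem_nhdsWithin] with s hs using abs_pos.2 (sub_ne_zero.2 hs)
  have hslope : Tendsto (slope (fun s => ⟪v, U s⟫) t) l (𝓝 ⟪v, v⟫) :=
    (hasDerivAt_iff_tendsto_slope.1 (hU.hasDerivAt_inner v)).mono_left hl
  have hsq : ⟪v, v⟫ ≤ ‖v‖ * K := by
    refine le_of_tendsto hslope ?_
    filter_upwards [hne, hK] with s hs hsK
    calc slope (fun s => ⟪v, U s⟫) t s ≤ |⟪v, U s - U t⟫| / |s - t| := by
          rw [slope_def_field, ← inner_sub_right, ← abs_div]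
          exact le_abs_self _
      _ ≤ ‖v‖ * (K * |s - t|) / |s - t| := by
          gcongr
          exact (abs_real_inner_le_norm _ _).trans (by gcongr)
      _ = ‖v‖ * K := by field_simp
  obtain ⟨s, hs, hsK⟩ := (hne.and hK).exists
  have hK0 : 0 ≤ K := nonneg_of_mul_nonneg_left ((norm_nonneg _).trans hsK) hs
  rw [real_inner_self_eq_norm_mul_norm] at hsq
  by_contra! hlt
  nlinarith

end HasWeakDerivAt

/- Unlike Mathlib's `gronwallBound` lemmas, this needs no derivative at the left endpoint. -/
lemma le_mul_exp_of_hasDerivAt_le {f f' : ℝ → ℝ} {a b k c : ℝ} (hab : a ≤ b) (hk : 0 ≤ k)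
    (hc : 0 ≤ c) (hf : ContinuousOn f (Icc a b)) (hf' : ∀ r ∈ Ioo a b, HasDerivAt f (f' r) r)
    (hle : ∀ r ∈ Ioo a b, f' r ≤ k * f r + c) :
    f b ≤ (f a + c * (b - a)) * Real.exp (k * (b - a)) := by
  have hderiv : ∀ r ∈ Ioo a b,
      HasDerivAt (fun r => Real.exp (-(k * (r - a))) * f r - c * (r - a))
        (Real.exp (-(k * (r - a))) * (f' r - k * f r) - c) r := by
    intro r hr
    have hlin (d : ℝ) : HasDerivAt (fun r : ℝ => d * (r - a)) d r := by
      simpa using ((hasDerivAt_id r).sub_const a).const_mul d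
    refine (((hlin k).fun_neg.exp.fun_mul (hf' r hr)).fun_sub (hlin c)).congr_deriv ?_
    ring
  have hanti : AntitoneOn (fun r => Real.exp (-(k * (r - a))) * f r - c * (r - a)) (Icc a b) := by
    refine antitoneOn_of_hasDerivWithinAt_nonpos (convex_Icc a b) (by fun_prop)
      (fun r hr => (hderiv r (by simpa using hr)).hasDerivWithinAt) fun r hr => ?_
    rw [interior_Icc] at hr
    have hexp : Real.exp (-(k * (r - a))) ≤ 1 := by
      rw [Real.exp_le_one_iff, neg_nonpos]
      exact mul_nonneg hk (sub_nonneg.2 hr.1.le)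
    have := mul_le_mul_of_nonneg_left (sub_le_iff_le_add'.2 (hle r hr))
      (Real.exp_pos (-(k * (r - a)))).le
    nlinarith
  have hend := hanti (left_mem_Icc.2 hab) (right_mem_Icc.2 hab) hab
  simp only [sub_self, mul_zero, neg_zero, Real.exp_zero, one_mul, sub_zero] at hend
  rw [← div_le_iff₀ (Real.exp_pos _), div_eq_mul_inv, ← Real.exp_neg]
  linarith

section Dissipative

variable {U V : ℝ → H} {C a b : ℝ}

lemma norm_sq_le_of_inner_weakDeriv_le {k c : ℝ} (hab : a ≤ b) (hk : 0 ≤ k) (hc : 0 ≤ c)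
    (hU : ContinuousOn U (Icc a b)) (hweak : ∀ s ∈ Ioo a b, HasWeakDerivAt U (V s) s)
    (hle : ∀ s ∈ Ioo a b, ⟪U s, V s⟫ ≤ k * ‖U s‖ ^ 2 + c) :
    ‖U b‖ ^ 2 ≤ (‖U a‖ ^ 2 + 2 * c * (b - a)) * Real.exp (2 * k * (b - a)) :=
  le_mul_exp_of_hasDerivAt_le (f := fun s => ‖U s‖ ^ 2) hab (by positivity) (by positivity)
    (hU.norm.pow 2) (fun s hs => (hweak s hs).hasDerivAt_norm_sq) fun s hs => by linarith [hle s hs]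

lemma norm_sq_sub_initial_le (hab : a < b) (hC : 0 ≤ C) (hU : ContinuousOn U (Icc a b))
    (hweak : ∀ s ∈ Ioo a b, HasWeakDerivAt U (V s) s)
    (hdiss : ∀ s ∈ Ioo a b, ⟪U s - U a, V s - V a⟫ ≤ C * ‖U s - U a‖ ^ 2) :
    ‖U b - U a‖ ^ 2 ≤ ((b - a) * ‖V a‖) ^ 2 * Real.exp (1 + 2 * C * (b - a)) := by
  set η := b - a
  have hη : 0 < η := sub_pos.2 hab
  have hyoung (z : H) : ⟪z, V a⟫ ≤ (2 * η)⁻¹ * ‖z‖ ^ 2 + η / 2 * ‖V a‖ ^ 2 := by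
    have hsquare : (2 * η)⁻¹ * (‖z‖ - η * ‖V a‖) ^ 2 =
        (2 * η)⁻¹ * ‖z‖ ^ 2 + η / 2 * ‖V a‖ ^ 2 - ‖z‖ * ‖V a‖ := by
      field_simp
      ring
    have : 0 ≤ (2 * η)⁻¹ * (‖z‖ - η * ‖V a‖) ^ 2 := by positivity
    linarith [real_inner_le_norm z (V a)]
  have hgronwall := norm_sq_le_of_inner_weakDeriv_le (U := fun s => U s - U a)
    (k := C + (2 * η)⁻¹) (c := η / 2 * ‖V a‖ ^ 2) hab.le (by positivity) (by positivity)
    (hU.sub continuousOn_const) (fun s hs => (hweak s hs).sub_const (U a)) fun s hs => by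
      have := hdiss s hs
      rw [inner_sub_right] at this
      linarith [hyoung (U s - U a)]
  refine hgronwall.trans_eq ?_
  rw [sub_self, norm_zero]
  congr 1
  · ring
  · congr 1
    change 2 * (C + (2 * η)⁻¹) * η = 1 + 2 * C * η
    field_simp
    ring

/- The translate of a dissipative evolution is again one. -/
lemma norm_sq_translate_sub_le {η : ℝ} (hab : a ≤ b) (hη : 0 ≤ η) (hC : 0 ≤ C)
    (hU : ContinuousOn U (Icc a (b + η)))
    (hweak : ∀ s ∈ Ioo a (b + η), HasWeakDerivAt U (V s) s)
    (hdiss : ∀ s ∈ Icc a (b + η), ∀ t ∈ Icc a (b + η),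
      ⟪U t - U s, V t - V s⟫ ≤ C * ‖U t - U s‖ ^ 2) :
    ‖U (b + η) - U b‖ ^ 2 ≤ ‖U (a + η) - U a‖ ^ 2 * Real.exp (2 * C * (b - a)) := by
  have hmem : ∀ r ∈ Icc a b, r ∈ Icc a (b + η) ∧ r + η ∈ Icc a (b + η) := fun r hr =>
    ⟨⟨hr.1, by linarith [hr.2]⟩, by linarith [hr.1], by linarith [hr.2]⟩
  simpa using norm_sq_le_of_inner_weakDeriv_le (U := fun r => U (r + η) - U r)
    (V := fun r => V (r + η) - V r) hab hC le_rfl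
    ((hU.comp (by fun_prop) fun r hr => (hmem r hr).2).sub (hU.mono fun r hr => (hmem r hr).1))
    (fun r hr => (hweak _ ⟨by linarith [hr.1], by linarith [hr.2]⟩).comp_add_const.sub
      (hweak r ⟨hr.1, by linarith [hr.2]⟩))
    fun r hr => by
      obtain ⟨hr₁, hr₂⟩ := hmem r (Ioo_subset_Icc_self hr)
      simpa using hdiss r hr₁ _ hr₂

/- The increments over a time step `η` grow at most exponentially from the first one; dividing by
`η` bounds the derivative. -/
lemma norm_weakDeriv_le_of_dissipative (hab : a < b) (hC : 0 ≤ C) (hU : ContinuousOn U (Icc a b))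
    (hweak : ∀ s ∈ Ioc a b, HasWeakDerivAt U (V s) s)
    (hdiss : ∀ s ∈ Icc a b, ∀ t ∈ Icc a b, ⟪U t - U s, V t - V s⟫ ≤ C * ‖U t - U s‖ ^ 2) :
    ‖V b‖ ≤ Real.exp (1 / 2 + C * (b - a)) * ‖V a‖ := by
  refine (hweak b (right_mem_Ioc.2 hab)).norm_le (l := 𝓝[<] b)
    (nhdsWithin_mono b fun s hs => hs.ne) ?_
  filter_upwards [Ioo_mem_nhdsLT hab] with s hs
  obtain ⟨η, hη, rfl⟩ : ∃ η, 0 < η ∧ b = s + η := ⟨b - s, sub_pos.2 hs.2, by ring⟩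
  have hsub : Icc a (a + η) ⊆ Icc a (s + η) := Icc_subset_Icc_right (by linarith [hs.1])
  have hfirst : ‖U (a + η) - U a‖ ^ 2 ≤ (η * ‖V a‖) ^ 2 * Real.exp (1 + 2 * C * η) := by
    simpa using norm_sq_sub_initial_le (lt_add_of_pos_right a hη) hC (hU.mono hsub)
      (fun r hr => hweak r ⟨hr.1, by linarith [hr.2, hs.1]⟩)
      fun r hr => hdiss a (left_mem_Icc.2 hab.le) r (hsub (Ioo_subset_Icc_self hr))
  have hgrowth := norm_sq_translate_sub_le hs.1.le hη.le hC hU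
    (fun r hr => hweak r (Ioo_subset_Ioc_self hr)) hdiss
  rw [norm_sub_rev, sub_add_cancel_left, abs_neg, abs_of_pos hη]
  refine le_of_sq_le_sq ?_ (by positivity)
  calc ‖U (s + η) - U s‖ ^ 2
      ≤ (η * ‖V a‖) ^ 2 * Real.exp (1 + 2 * C * η) * Real.exp (2 * C * (s - a)) :=
        hgrowth.trans (by gcongr)
    _ = (Real.exp (1 / 2 + C * (s + η - a)) * ‖V a‖ * η) ^ 2 := by
        rw [mul_assoc, ← Real.exp_add, mul_pow, mul_pow, mul_pow, ← Real.exp_nat_mul]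
        have hexponent : 1 + 2 * C * η + 2 * C * (s - a) =
            (2 : ℕ) * (1 / 2 + C * (s + η - a)) := by
          push_cast; ring
        rw [hexponent]
        ring

/- Between two bad times the bound is propagated from the last bad time on. -/
lemma norm_weakDeriv_le_of_norm_le_bad {N : ℝ} {G : Set ℝ} (hC : 0 ≤ C)
    (hU : ContinuousOn U (Icc a b)) (hG : IsOpen G)
    (hweak : ∀ s ∈ Icc a b ∩ G, HasWeakDerivAt U (V s) s)
    (hdiss : ∀ s ∈ Icc a b, ∀ t ∈ Icc a b, ⟪U t - U s, V t - V s⟫ ≤ C * ‖U t - U s‖ ^ 2)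
    (hinit : ‖V a‖ ≤ N) (hbad : ∀ s ∈ Icc a b \ G, ‖V s‖ ≤ N) :
    ∀ t ∈ Icc a b, ‖V t‖ ≤ Real.exp (1 / 2 + C * (b - a)) * N := by
  intro t ht
  obtain ⟨c, ⟨hc, hcbad⟩, hcmax⟩ := (isCompact_Icc.inter_right
    ((isClosed_singleton (x := a)).union hG.isClosed_compl)).exists_isGreatest
    ⟨a, left_mem_Icc.2 ht.1, Or.inl rfl⟩
  have hcN : ‖V c‖ ≤ N := hcbad.elim (fun h => h ▸ hinit)
    fun h => hbad c ⟨⟨hc.1, hc.2.trans ht.2⟩, h⟩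
  have hN : 0 ≤ N := (norm_nonneg _).trans hinit
  have hsub : Icc c t ⊆ Icc a b := Icc_subset_Icc hc.1 ht.2
  rcases hc.2.eq_or_lt with rfl | hct
  · have hfactor : 1 ≤ Real.exp (1 / 2 + C * (b - a)) :=
      Real.one_le_exp (by have := mul_nonneg hC (sub_nonneg.2 (ht.1.trans ht.2)); positivity)
    exact hcN.trans (le_mul_of_one_le_left hN hfactor)
  · have hgood : ∀ s ∈ Ioc c t, HasWeakDerivAt U (V s) s := fun s hs => by
      refine hweak s ⟨hsub (Ioc_subset_Icc_self hs), by_contra fun hsG => ?_⟩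
      exact hs.1.not_ge (hcmax ⟨⟨hc.1.trans hs.1.le, hs.2⟩, Or.inr hsG⟩)
    calc ‖V t‖ ≤ Real.exp (1 / 2 + C * (t - c)) * ‖V c‖ :=
          norm_weakDeriv_le_of_dissipative hct hC (hU.mono hsub) hgood
            fun s hs r hr => hdiss s (hsub hs) r (hsub hr)
      _ ≤ Real.exp (1 / 2 + C * (b - a)) * N := by
          gcongr
          exacts [ht.2, hc.1]

/- Near the point supplied by Baire's theorem on the closed set of bad times, `V` is bounded at
the bad times, and dissipativity carries this bound over the gaps between them. -/
theorem exists_eventually_norm_le_of_dissipative {I : Set ℝ} (hI : IsOpen I)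
    (hC : 0 ≤ C) (hU : ContinuousOn U I) (hV : LowerSemicontinuousOn (fun t => ‖V t‖) I)
    (hdiss : ∀ s ∈ I, ∀ t ∈ I, ⟪U t - U s, V t - V s⟫ ≤ C * ‖U t - U s‖ ^ 2)
    (hweak : ∀ t ∈ I, (∃ K, ∀ᶠ s in 𝓝 t, ‖V s‖ ≤ K) → HasWeakDerivAt U (V t) t) :
    ∀ t ∈ I, ∃ K, ∀ᶠ s in 𝓝 t, ‖V s‖ ≤ K := by
  set G : Set ℝ := {t | ∃ K, ∀ᶠ s in 𝓝 t, ‖V s‖ ≤ K}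
  have hG : IsOpen G := isOpen_iff_eventually.2 fun t ⟨K, hK⟩ =>
    (eventually_eventually_nhds.2 hK).mono fun s hs => ⟨K, hs⟩
  change I ⊆ G
  by_contra hIG
  obtain ⟨t₁, ht₁⟩ := not_subset.1 hIG
  have : LocallyCompactSpace ↥(I \ G) :=
    (hI.isLocallyClosed.inter hG.isClosed_compl.isLocallyClosed).locallyCompactSpace
  have : Nonempty ↥(I \ G) := ⟨t₁, ht₁⟩
  obtain ⟨⟨t₀, ht₀, hbad₀⟩, K, hK⟩ := exists_eventually_le_of_lowerSemicontinuous
    (lowerSemicontinuous_restrict_iff.2 (hV.mono (sdiff_subset (t := G))))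
  have hwindow : ∀ᶠ s in 𝓝 t₀, s ∈ I ∧ (s ∈ I \ G → ‖V s‖ ≤ K) :=
    (hI.eventually_mem ht₀).and <| eventually_nhdsWithin_iff.1 <|
      (eventually_nhds_subtype_iff _ _ fun s => ‖V s‖ ≤ K).1 hK
  obtain ⟨ε, hε, hball⟩ := Metric.nhds_basis_closedBall.eventually_iff.1 hwindow
  rw [Real.closedBall_eq_Icc] at hball
  have hbound := norm_weakDeriv_le_of_norm_le_bad (N := max ‖V (t₀ - ε)‖ K) hC
    (hU.mono fun s hs => (hball hs).1) hG (fun s hs => hweak s (hball hs.1).1 hs.2)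
    (fun s hs t ht => hdiss s (hball hs).1 t (hball ht).1) (le_max_left _ _)
    fun s hs => ((hball hs.1).2 ⟨(hball hs.1).1, hs.2⟩).trans (le_max_right _ _)
  exact hbad₀ ⟨_, mem_of_superset
    (Icc_mem_nhds (sub_lt_self t₀ hε) (lt_add_of_pos_right t₀ hε)) hbound⟩

end Dissipative

end Hilbert

section RiemannSum

variable {E : Type*} [NormedAddCommGroup E] [NormedSpace ℝ E] {g g' : ℝ → E} {a b : ℝ}

lemma norm_riemannSum_sub_le {n : ℕ} {h ε : ℝ} (hh : 0 ≤ h) (hn : a + n * h = b)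
    (hg : ∀ τ ∈ Icc a b, HasDerivAt g (g' τ) τ)
    (hε : ∀ σ ∈ Icc a b, ∀ τ ∈ Icc a b, dist σ τ ≤ h → ‖g' σ - g' τ‖ ≤ ε) :
    ‖∑ i ∈ Finset.range n, h • g' (a + i * h) - (g b - g a)‖ ≤ ε * (b - a) := by
  set node : ℕ → ℝ := fun i => a + i * h
  have hsucc (i : ℕ) : node (i + 1) = node i + h := by simp only [node]; push_cast; ring
  have hmono : Monotone node := monotone_nat_of_le_succ fun i => by rw [hsucc]; linarith
  have hzero : node 0 = a := by simp [node]
  have hcell : ∀ i < n, ‖h • g' (node i) - (g (node (i + 1)) - g (node i))‖ ≤ ε * h := by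
    intro i hi
    have hsub : Icc (node i) (node (i + 1)) ⊆ Icc a b :=
      Icc_subset_Icc (hzero ▸ hmono i.zero_le) (hn ▸ hmono hi)
    have hle := hmono i.le_succ
    have hmvt := (convex_Icc (node i) (node (i + 1))).norm_image_sub_le_of_norm_hasDerivWithin_le
      (f := fun τ => g τ - τ • g' (node i)) (f' := fun τ => g' τ - g' (node i)) (C := ε)
      (fun τ hτ => by
        simpa using ((hg τ (hsub hτ)).fun_sub ((hasDerivAt_id τ).smul_const _)).hasDerivWithinAt)
      (fun τ hτ => hε _ (hsub hτ) _ (hsub (left_mem_Icc.2 hle)) <| by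
        rw [Real.dist_eq, abs_of_nonneg (sub_nonneg.2 hτ.1)]
        linarith [hτ.2, hsucc i])
      (left_mem_Icc.2 hle) (right_mem_Icc.2 hle)
    rw [hsucc, add_sub_cancel_left, Real.norm_of_nonneg hh, ← hsucc] at hmvt
    refine (norm_sub_rev _ _).trans_le (Eq.trans_le (congrArg norm ?_) hmvt)
    rw [hsucc]
    module
  calc ‖∑ i ∈ Finset.range n, h • g' (node i) - (g b - g a)‖
      = ‖∑ i ∈ Finset.range n, (h • g' (node i) - (g (node (i + 1)) - g (node i)))‖ := by
        rw [Finset.sum_sub_distrib, Finset.sum_range_sub (fun i => g (node i)), hzero]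
        congr 4
        exact hn.symm
    _ ≤ ∑ _i ∈ Finset.range n, ε * h :=
        norm_sum_le_of_le _ fun i hi => hcell i (Finset.mem_range.1 hi)
    _ = ε * (b - a) := by
        rw [Finset.sum_const, Finset.card_range, nsmul_eq_mul, ← hn]
        ring

lemma tendsto_riemannSum_of_hasDerivAt (hab : a ≤ b)
    (hg : ∀ τ ∈ Icc a b, HasDerivAt g (g' τ) τ) (hg' : ContinuousOn g' (Icc a b)) :
    Tendsto (fun n : ℕ => ∑ i ∈ Finset.range n, ((b - a) / n) • g' (a + i * ((b - a) / n)))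
      atTop (𝓝 (g b - g a)) := by
  rw [Metric.tendsto_nhds]
  intro ε hε
  obtain ⟨c, hc, hcε⟩ := exists_pos_mul_lt hε (b - a)
  obtain ⟨δ, hδ, hunif⟩ := Metric.uniformContinuousOn_iff.1
    (isCompact_Icc.uniformContinuousOn_of_continuous hg') c hc
  filter_upwards [(tendsto_const_div_atTop_nhds_zero_nat (b - a)).eventually_lt_const hδ,
    eventually_ne_atTop 0] with n hmesh hn
  have hstep : a + n * ((b - a) / n) = b := by field_simp; ring
  rw [dist_eq_norm]
  refine (norm_riemannSum_sub_le (by have := sub_nonneg.2 hab; positivity) hstep hg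
    fun σ hσ τ hτ hστ => ?_).trans_lt ((mul_comm _ _).trans_lt hcε)
  rw [← dist_eq_norm]
  exact (hunif σ hσ τ hτ (hστ.trans_lt hmesh)).le

end RiemannSum

section Lp

variable {X : Type*} [MeasurableSpace X] {μ : Measure X} {ι : Type*} {l : Filter ι}

lemma norm_toLp_le_of_frequently_of_ae_tendsto {E : Type*} [NormedAddCommGroup E] {p : ENNReal}
    [l.IsCountablyGenerated] {f : ι → X → E} {g : X → E} {K : ℝ} (hf : ∀ i, MemLp (f i) p μ)
    (hg : MemLp g p μ) (hK : ∃ᶠ i in l, ‖(hf i).toLp‖ ≤ K)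
    (hlim : ∀ᵐ x ∂μ, Tendsto (fun i => f i x) l (𝓝 (g x))) : ‖hg.toLp‖ ≤ K := by
  have : (l ⊓ 𝓟 {i | ‖(hf i).toLp‖ ≤ K}).NeBot := frequently_mem_iff_neBot.1 hK
  obtain ⟨i, hi⟩ := hK.exists
  have hK0 : 0 ≤ K := ENNReal.toReal_nonneg.trans hi
  have hfatou : eLpNorm g p μ ≤ ENNReal.ofReal K := by
    refine Lp.eLpNorm_le_of_ae_tendsto (u := l ⊓ 𝓟 {i | ‖(hf i).toLp‖ ≤ K}) ?_
      (fun i => (hf i).aestronglyMeasurable)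
      (hlim.mono fun x hx => hx.mono_left inf_le_left)
    filter_upwards [mem_inf_of_right (mem_principal_self _)] with i hi
    exact (ENNReal.le_ofReal_iff_toReal_le (hf i).eLpNorm_ne_top hK0).2 (Lp.norm_toLp _ (hf i) ▸ hi)
  rw [Lp.norm_toLp]
  exact ENNReal.toReal_le_of_le_ofReal hK0 hfatou

lemma lowerSemicontinuousOn_norm_toLp {E : Type*} [NormedAddCommGroup E] {p : ENNReal}
    {T : Type*} [TopologicalSpace T] [FirstCountableTopology T] {I : Set T} {f : T → X → E}
    (hf : ∀ t, MemLp (f t) p μ) (hcont : ∀ᵐ x ∂μ, ContinuousOn (fun t => f t x) I) :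
    LowerSemicontinuousOn (fun t => ‖(hf t).toLp‖) I := by
  intro t ht K hK
  by_contra hfreq
  simp only [not_eventually, not_lt] at hfreq
  exact hK.not_ge <| norm_toLp_le_of_frequently_of_ae_tendsto hf (hf t) hfreq <|
    hcont.mono fun x hx => hx t ht

section WeakConvergence

variable [l.IsCountablyGenerated] {f : ι → X → ℝ} {g : X → ℝ} {K : ℝ}

/- Fatou's lemma for `f i + m φ` with `m` large: a defect `⟪φ, f i⟫ ≤ ⟪φ, g⟫ - ε` would cost
`2 m ε` in the squared norm, more than the bound `K ^ 2` can compensate. -/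
lemma eventually_lt_inner_toLp (hf : ∀ i, MemLp (f i) 2 μ) (hg : MemLp g 2 μ)
    (hK : ∀ᶠ i in l, ‖(hf i).toLp‖ ≤ K) (hlim : ∀ᵐ x ∂μ, Tendsto (fun i => f i x) l (𝓝 (g x)))
    (φ : Lp ℝ 2 μ) {c : ℝ} (hc : c < ⟪φ, hg.toLp⟫) : ∀ᶠ i in l, c < ⟪φ, (hf i).toLp⟫ := by
  by_contra hfreq
  simp only [not_eventually, not_lt] at hfreq
  obtain ⟨m, hm⟩ := exists_nat_gt (K ^ 2 / (2 * (⟪φ, hg.toLp⟫ - c)))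
  rw [div_lt_iff₀ (by linarith)] at hm
  have hφ : MemLp (⇑((m : ℝ) • φ)) 2 μ := Lp.memLp _
  have hexpand {k : X → ℝ} (hk : MemLp k 2 μ) :
      ‖(hk.add hφ).toLp‖ ^ 2 = ‖hk.toLp‖ ^ 2 + 2 * m * ⟪φ, hk.toLp⟫ + ‖(m : ℝ) • φ‖ ^ 2 := by
    rw [MemLp.toLp_add hk hφ, Lp.toLp_coeFn, norm_add_sq_real, inner_smul_right, real_inner_comm]
    ring
  set A := K ^ 2 + 2 * m * c + ‖(m : ℝ) • φ‖ ^ 2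
  have hbound : ∃ᶠ i in l, ‖((hf i).add hφ).toLp‖ ^ 2 ≤ A := by
    refine (hfreq.and_eventually hK).mono fun i ⟨hi, hiK⟩ => ?_
    simp only [A, hexpand (hf i)]
    gcongr
  obtain ⟨i, hi⟩ := hbound.exists
  have hfatou := norm_toLp_le_of_frequently_of_ae_tendsto (fun i => (hf i).add hφ) (hg.add hφ)
    (hbound.mono fun i hi => Real.le_sqrt_of_sq_le hi) (hlim.mono fun x hx => hx.add_const _)
  rw [Real.le_sqrt (norm_nonneg _) ((sq_nonneg _).trans hi), hexpand hg] at hfatou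
  nlinarith [sq_nonneg ‖hg.toLp‖]

lemma tendsto_inner_toLp (hf : ∀ i, MemLp (f i) 2 μ) (hg : MemLp g 2 μ)
    (hK : ∀ᶠ i in l, ‖(hf i).toLp‖ ≤ K) (hlim : ∀ᵐ x ∂μ, Tendsto (fun i => f i x) l (𝓝 (g x)))
    (φ : Lp ℝ 2 μ) : Tendsto (fun i => ⟪φ, (hf i).toLp⟫) l (𝓝 ⟪φ, hg.toLp⟫) := by
  refine tendsto_order.2 ⟨fun c hc => eventually_lt_inner_toLp hf hg hK hlim φ hc, fun c hc => ?_⟩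
  have := eventually_lt_inner_toLp hf hg hK hlim (-φ) (c := -c) (by simpa [inner_neg_left] using hc)
  simpa [inner_neg_left] using this

end WeakConvergence

lemma inner_toLp_toLp {f g : X → ℝ} (hf : MemLp f 2 μ) (hg : MemLp g 2 μ) :
    ⟪hf.toLp, hg.toLp⟫ = ∫ x, f x * g x ∂μ := by
  rw [L2.inner_def]
  refine integral_congr_ae ?_
  filter_upwards [hf.coeFn_toLp, hg.coeFn_toLp] with x hfx hgx
  rw [hfx, hgx, RCLike.inner_apply', conj_trivial]

lemma norm_toLp_sq {f : X → ℝ} (hf : MemLp f 2 μ) : ‖hf.toLp‖ ^ 2 = ∫ x, f x ^ 2 ∂μ := by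
  rw [← real_inner_self_eq_norm_sq, inner_toLp_toLp]
  simp only [pow_two]

section Derivative

variable {u u' : ℝ → X → ℝ} {K a b t : ℝ}

lemma norm_toLp_sub_le (hu : ∀ t, MemLp (u t) 2 μ) (hu' : ∀ t, MemLp (u' t) 2 μ) (hab : a ≤ b)
    (hderiv : ∀ᵐ x ∂μ, ∀ τ ∈ Icc a b, HasDerivAt (fun s => u s x) (u' τ x) τ)
    (hcont : ∀ᵐ x ∂μ, ContinuousOn (fun τ => u' τ x) (Icc a b))
    (hK : ∀ τ ∈ Icc a b, ‖(hu' τ).toLp‖ ≤ K) : ‖(hu b).toLp - (hu a).toLp‖ ≤ K * (b - a) := by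
  set node : ℕ → ℕ → ℝ := fun n i => a + i * ((b - a) / n)
  have hnode : ∀ n, ∀ i ∈ Finset.range n, node n i ∈ Icc a b := fun n i hi => by
    have hin : (i : ℝ) ≤ n := by exact_mod_cast (Finset.mem_range.1 hi).le
    have hn : (0 : ℝ) < n := by exact_mod_cast (Nat.zero_le i).trans_lt (Finset.mem_range.1 hi)
    have : 0 ≤ b - a := sub_nonneg.2 hab
    refine ⟨le_add_of_nonneg_right (by positivity), ?_⟩
    calc a + i * ((b - a) / n) ≤ a + n * ((b - a) / n) := by gcongr
      _ = b := by field_simp; ring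
  set S : ℕ → Lp ℝ 2 μ := fun n => ∑ i ∈ Finset.range n, ((b - a) / n) • (hu' (node n i)).toLp
  have hS : ∃ᶠ n in atTop, ‖S n‖ ≤ K * (b - a) := by
    refine (eventually_ne_atTop 0).frequently.mono fun n hn => ?_
    have : 0 ≤ b - a := sub_nonneg.2 hab
    calc ‖S n‖ ≤ ∑ _i ∈ Finset.range n, (b - a) / n * K := norm_sum_le_of_le _ fun i hi => by
          rw [norm_smul, Real.norm_of_nonneg (by positivity)]
          gcongr
          exact hK _ (hnode n i hi)
      _ = K * (b - a) := by
          rw [Finset.sum_const, Finset.card_range, nsmul_eq_mul]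
          field_simp
  rw [← MemLp.toLp_sub]
  refine norm_toLp_le_of_frequently_of_ae_tendsto (fun n => Lp.memLp (S n)) _ (l := atTop)
    (by simpa only [Lp.toLp_coeFn] using hS) ?_
  have hrep : ∀ᵐ x ∂μ, ∀ n, S n x = ∑ i ∈ Finset.range n, ((b - a) / n) • u' (node n i) x := by
    refine ae_all_iff.2 fun n => ?_
    filter_upwards [Lp.coeFn_fun_finsetSum (Finset.range n)
        fun i => ((b - a) / n) • (hu' (node n i)).toLp,
      ae_all_iff.2 fun i => Lp.coeFn_smul ((b - a) / n) (hu' (node n i)).toLp,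
      ae_all_iff.2 fun i => (hu' (node n i)).coeFn_toLp] with x hsum hsmul hcoe
    simp only [S, hsum, hsmul, Pi.smul_apply, hcoe]
  filter_upwards [hderiv, hcont, hrep] with x hx hx' hrepx
  simp only [hrepx]
  exact tendsto_riemannSum_of_hasDerivAt hab hx hx'

lemma hasWeakDerivAt_toLp (hu : ∀ t, MemLp (u t) 2 μ) (hu' : ∀ t, MemLp (u' t) 2 μ) {I : Set ℝ}
    (hI : I ∈ 𝓝 t) (hderiv : ∀ᵐ x ∂μ, ∀ τ ∈ I, HasDerivAt (fun s => u s x) (u' τ x) τ)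
    (hcont : ∀ᵐ x ∂μ, ContinuousOn (fun τ => u' τ x) I)
    (hK : ∀ᶠ s in 𝓝 t, ‖(hu' s).toLp‖ ≤ K) :
    HasWeakDerivAt (fun s => (hu s).toLp) (hu' t).toLp t := by
  obtain ⟨δ, hδ, hball⟩ := Metric.eventually_nhds_iff_ball.1 (hK.and hI)
  have hsub {a b : ℝ} (ha : a ∈ Metric.ball t δ) (hb : b ∈ Metric.ball t δ) :
      Icc a b ⊆ Metric.ball t δ := (convex_ball t δ).ordConnected.out ha hb
  have hincr : ∀ᶠ s in 𝓝 t, ‖(hu s).toLp - (hu t).toLp‖ ≤ K * |s - t| := by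
    have hle {a b : ℝ} (ha : a ∈ Metric.ball t δ) (hb : b ∈ Metric.ball t δ) (hab : a ≤ b) :
        ‖(hu b).toLp - (hu a).toLp‖ ≤ K * (b - a) :=
      norm_toLp_sub_le hu hu' hab
        (hderiv.mono fun x hx τ hτ => hx τ (hball τ (hsub ha hb hτ)).2)
        (hcont.mono fun x hx => hx.mono fun τ hτ => (hball τ (hsub ha hb hτ)).2)
        fun τ hτ => (hball τ (hsub ha hb hτ)).1
    have htmem := Metric.mem_ball_self (x := t) hδ
    filter_upwards [Metric.ball_mem_nhds t hδ] with s hs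
    rcases le_total t s with hts | hst
    · rw [abs_of_nonneg (sub_nonneg.2 hts)]
      exact hle htmem hs hts
    · rw [norm_sub_rev, abs_sub_comm, abs_of_nonneg (sub_nonneg.2 hst)]
      exact hle hs htmem hst
  refine ⟨fun φ => ?_, Asymptotics.IsBigO.of_bound K hincr⟩
  rw [hasDerivAt_iff_tendsto_slope]
  have hquotient := tendsto_inner_toLp (l := 𝓝[≠] t) (K := K)
    (fun s => ((hu s).sub (hu t)).const_smul (s - t)⁻¹) (hu' t) ?_ ?_ φ
  · refine hquotient.congr fun s => ?_
    rw [MemLp.toLp_const_smul _ ((hu s).sub (hu t)), MemLp.toLp_sub, inner_smul_right,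
      inner_sub_right]
    rfl
  · filter_upwards [hincr.filter_mono nhdsWithin_le_nhds, self_mem_nhdsWithin] with s hs hst
    rw [MemLp.toLp_const_smul _ ((hu s).sub (hu t)), MemLp.toLp_sub, norm_smul, norm_inv,
      Real.norm_eq_abs]
    rwa [inv_mul_le_iff₀ (abs_pos.2 (sub_ne_zero.2 hst)), mul_comm]
  · filter_upwards [hderiv] with x hx
    exact (hx t (mem_of_mem_nhds hI)).tendsto_slope

theorem hasWeakDerivAt_toLp_of_dissipative (hu : ∀ t, MemLp (u t) 2 μ)
    (hu' : ∀ t, MemLp (u' t) 2 μ) {C : ℝ} {I : Set ℝ} (hI : IsOpen I) (hC : 0 ≤ C)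
    (hderiv : ∀ᵐ x ∂μ, ∀ τ ∈ I, HasDerivAt (fun s => u s x) (u' τ x) τ)
    (hcont' : ∀ᵐ x ∂μ, ContinuousOn (fun τ => u' τ x) I)
    (hcont : ContinuousOn (fun t => (hu t).toLp) I)
    (hdiss : ∀ s ∈ I, ∀ t ∈ I, ⟪(hu t).toLp - (hu s).toLp, (hu' t).toLp - (hu' s).toLp⟫ ≤
      C * ‖(hu t).toLp - (hu s).toLp‖ ^ 2) :
    ∀ t ∈ I, HasWeakDerivAt (fun s => (hu s).toLp) (hu' t).toLp t := by
  have hweak : ∀ t ∈ I, (∃ K, ∀ᶠ s in 𝓝 t, ‖(hu' s).toLp‖ ≤ K) →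
      HasWeakDerivAt (fun s => (hu s).toLp) (hu' t).toLp t := fun t ht ⟨_, hK⟩ =>
    hasWeakDerivAt_toLp hu hu' (hI.mem_nhds ht) hderiv hcont' hK
  exact fun t ht => hweak t ht <| exists_eventually_norm_le_of_dissipative hI hC hcont
    (lowerSemicontinuousOn_norm_toLp hu' hcont') hdiss hweak t ht

end Derivative

lemma continuousOn_toLp_of_bounded [IsFiniteMeasure μ] {T : Type*} [TopologicalSpace T]
    [FirstCountableTopology T] {I : Set T} {u : T → X → ℝ} {M : ℝ} (hu : ∀ t, MemLp (u t) 2 μ)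
    (hM : ∀ t, ∀ᵐ x ∂μ, |u t x| ≤ M) (hcont : ∀ᵐ x ∂μ, ContinuousOn (fun t => u t x) I) :
    ContinuousOn (fun t => (hu t).toLp) I := by
  intro t ht
  rw [ContinuousWithinAt, tendsto_iff_norm_sub_tendsto_zero]
  have hsq : Tendsto (fun s => ∫ x, (u s x - u t x) ^ 2 ∂μ) (𝓝[I] t) (𝓝 (∫ _, 0 ∂μ)) := by
    refine tendsto_integral_filter_of_dominated_convergence (fun _ => (2 * M) ^ 2)
      (.of_forall fun s => (((hu s).sub (hu t)).aestronglyMeasurable.pow 2))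
      (.of_forall fun s => ?_) (integrable_const _) ?_
    · filter_upwards [hM s, hM t] with x hs ht
      rw [Real.norm_of_nonneg (sq_nonneg _), ← sq_abs]
      gcongr
      exact (abs_sub _ _).trans (by linarith)
    · filter_upwards [hcont] with x hx
      simpa using ((hx t ht).tendsto.sub_const (u t x)).pow 2
  have hnorm (s : T) : ∫ x, (u s x - u t x) ^ 2 ∂μ = ‖(hu s).toLp - (hu t).toLp‖ ^ 2 := by
    rw [← MemLp.toLp_sub, norm_toLp_sq]
    simp only [Pi.sub_apply]
  simp only [hnorm, integral_zero] at hsq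
  simpa [Real.sqrt_sq] using hsq.sqrt

end Lp

section Profile

/-- `f` is three times continuously differentiable on `[0, L]`. Its successive derivatives `f₁`,
`f₂`, `f₃` are arguments; at the endpoints they are only required to be continuous. -/
structure HasThreeDerivs (L : ℝ) (f f₁ f₂ f₃ : ℝ → ℝ) : Prop where
  continuousOn : ContinuousOn f (Icc 0 L)
  continuousOn₁ : ContinuousOn f₁ (Icc 0 L)
  continuousOn₂ : ContinuousOn f₂ (Icc 0 L)
  continuousOn₃ : ContinuousOn f₃ (Icc 0 L)
  hasDerivAt : ∀ x ∈ Ioo 0 L, HasDerivAt f (f₁ x) x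
  hasDerivAt₁ : ∀ x ∈ Ioo 0 L, HasDerivAt f₁ (f₂ x) x
  hasDerivAt₂ : ∀ x ∈ Ioo 0 L, HasDerivAt f₂ (f₃ x) x

/-- A possible state of the KdV system: `f` with its three derivatives, subject to the boundary
conditions. -/
structure IsKdVProfile (L : ℝ) (f f₁ f₂ f₃ : ℝ → ℝ) : Prop
    extends HasThreeDerivs L f f₁ f₂ f₃ where
  apply_zero : f 0 = 0
  apply_right : f L = 0
  deriv_right : f₁ L = 0

variable {L : ℝ} {f f₁ f₂ f₃ g g₁ g₂ g₃ : ℝ → ℝ}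

lemma hasThreeDerivs_of_contDiffOn (hL : 0 < L) (hf : ContDiffOn ℝ 3 f (Icc 0 L)) :
    HasThreeDerivs L f (derivWithin f (Icc 0 L)) (iteratedDerivWithin 2 f (Icc 0 L))
      (iteratedDerivWithin 3 f (Icc 0 L)) := by
  have huniq : UniqueDiffOn ℝ (Icc 0 L) := uniqueDiffOn_Icc hL
  have hcont (n : ℕ) (hn : n ≤ 3) : ContinuousOn (iteratedDerivWithin n f (Icc 0 L)) (Icc 0 L) :=
    hf.continuousOn_iteratedDerivWithin (by exact_mod_cast hn) huniq
  have hderiv (n : ℕ) (hn : n < 3) (x : ℝ) (hx : x ∈ Ioo 0 L) :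
      HasDerivAt (iteratedDerivWithin n f (Icc 0 L))
        (iteratedDerivWithin (n + 1) f (Icc 0 L) x) x := by
    rw [iteratedDerivWithin_succ]
    exact (hf.differentiableOn_iteratedDerivWithin (by exact_mod_cast hn) huniq x
      (Ioo_subset_Icc_self hx)).hasDerivWithinAt.hasDerivAt (Icc_mem_nhds hx.1 hx.2)
  rw [← iteratedDerivWithin_one]
  exact ⟨hf.continuousOn, hcont 1 (by simp), hcont 2 (by simp), hcont 3 le_rfl,
    by simpa only [iteratedDerivWithin_zero] using hderiv 0 (by simp), hderiv 1 (by simp),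
    hderiv 2 (by simp)⟩

lemma HasThreeDerivs.sub (hf : HasThreeDerivs L f f₁ f₂ f₃) (hg : HasThreeDerivs L g g₁ g₂ g₃) :
    HasThreeDerivs L (f - g) (f₁ - g₁) (f₂ - g₂) (f₃ - g₃) where
  continuousOn := hf.continuousOn.sub hg.continuousOn
  continuousOn₁ := hf.continuousOn₁.sub hg.continuousOn₁
  continuousOn₂ := hf.continuousOn₂.sub hg.continuousOn₂
  continuousOn₃ := hf.continuousOn₃.sub hg.continuousOn₃
  hasDerivAt x hx := (hf.hasDerivAt x hx).sub (hg.hasDerivAt x hx)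
  hasDerivAt₁ x hx := (hf.hasDerivAt₁ x hx).sub (hg.hasDerivAt₁ x hx)
  hasDerivAt₂ x hx := (hf.hasDerivAt₂ x hx).sub (hg.hasDerivAt₂ x hx)

lemma IsKdVProfile.sub (hf : IsKdVProfile L f f₁ f₂ f₃) (hg : IsKdVProfile L g g₁ g₂ g₃) :
    IsKdVProfile L (f - g) (f₁ - g₁) (f₂ - g₂) (f₃ - g₃) where
  toHasThreeDerivs := hf.toHasThreeDerivs.sub hg.toHasThreeDerivs
  apply_zero := by simp [hf.apply_zero, hg.apply_zero]
  apply_right := by simp [hf.apply_right, hg.apply_right]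
  deriv_right := by simp [hf.deriv_right, hg.deriv_right]

lemma integral_eq_integral_add_of_hasDerivAt_sub {a b : ℝ} {F k m : ℝ → ℝ} (hab : a ≤ b)
    (hk : ContinuousOn k (Icc a b)) (hm : ContinuousOn m (Icc a b)) (hF : ContinuousOn F (Icc a b))
    (hderiv : ∀ x ∈ Ioo a b, HasDerivAt F (k x - m x) x) :
    ∫ x in a..b, k x = (∫ x in a..b, m x) + (F b - F a) := by
  have hk' := hk.intervalIntegrable_of_Icc (μ := volume) hab
  have hm' := hm.intervalIntegrable_of_Icc (μ := volume) hab
  rw [← intervalIntegral.integral_eq_sub_of_hasDerivAt_of_le hab hF hderiv (hk'.sub hm'),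
    intervalIntegral.integral_sub hk' hm', add_sub_cancel]

/- Kato's multiplier `1 + x` turns the dispersive term into control of `∫ f₁ ^ 2`. -/
lemma IsKdVProfile.integral_weight_mul_linear (hL : 0 ≤ L) (hf : IsKdVProfile L f f₁ f₂ f₃) :
    ∫ x in (0 : ℝ)..L, (1 + x) * (f x * (f₁ x + f₃ x)) =
      (∫ x in (0 : ℝ)..L, (3 / 2 * f₁ x ^ 2 - 1 / 2 * f x ^ 2)) + 1 / 2 * f₁ 0 ^ 2 := by
  obtain ⟨⟨hc, hc₁, hc₂, hc₃, hd, hd₁, hd₂⟩, h0, hfL, hf₁L⟩ := hf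
  rw [integral_eq_integral_add_of_hasDerivAt_sub hL (by fun_prop) (by fun_prop)
    (F := fun x => (1 + x) * (f x * f₂ x - f₁ x ^ 2 / 2 + f x ^ 2 / 2) - f x * f₁ x)
    (m := fun x => 3 / 2 * f₁ x ^ 2 - 1 / 2 * f x ^ 2) (by fun_prop) fun x hx => ?_]
  · simp only [h0, hfL, hf₁L]
    ring
  · have hinner := (((hd x hx).fun_mul (hd₂ x hx)).fun_sub
      (((hd₁ x hx).fun_pow 2).div_const 2)).fun_add (((hd x hx).fun_pow 2).div_const 2)
    refine ((((hasDerivAt_id' x).const_add 1).fun_mul hinner).fun_sub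
      ((hd x hx).fun_mul (hd₁ x hx))).congr_deriv ?_
    push_cast
    ring

lemma IsKdVProfile.integral_weight_mul_convection_sub (hL : 0 ≤ L)
    (hf : IsKdVProfile L f f₁ f₂ f₃) (hg : IsKdVProfile L g g₁ g₂ g₃) :
    ∫ x in (0 : ℝ)..L, (1 + x) * ((f x - g x) * (f x * f₁ x - g x * g₁ x)) =
      ∫ x in (0 : ℝ)..L,
        -(((f x - g x) + (1 + x) * (f₁ x - g₁ x)) * ((f x ^ 2 - g x ^ 2) / 2)) := by
  obtain ⟨⟨hfc, hfc₁, -, -, hfd, -, -⟩, hf0, hfL, -⟩ := hf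
  obtain ⟨⟨hgc, hgc₁, -, -, hgd, -, -⟩, hg0, hgL, -⟩ := hg
  rw [integral_eq_integral_add_of_hasDerivAt_sub hL (by fun_prop) (by fun_prop)
    (F := fun x => (1 + x) * ((f x - g x) * ((f x ^ 2 - g x ^ 2) / 2)))
    (m := fun x => -(((f x - g x) + (1 + x) * (f₁ x - g₁ x)) * ((f x ^ 2 - g x ^ 2) / 2)))
    (by fun_prop) fun x hx => ?_]
  · simp only [hf0, hfL, hg0, hgL]
    ring
  · refine (((hasDerivAt_id' x).const_add 1).fun_mul (((hfd x hx).fun_sub (hgd x hx)).fun_mul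
      ((((hfd x hx).fun_pow 2).fun_sub ((hgd x hx).fun_pow 2)).div_const 2))).congr_deriv ?_
    push_cast
    ring

/- The term in `d` left over by the convection is absorbed by the gain `3 / 2 * d ^ 2`. -/
lemma weighted_convection_sub_gain_le {a b d r R M : ℝ} (ha : |a| ≤ M) (hb : |b| ≤ M) (hr : 1 ≤ r)
    (hrR : r ≤ R) :
    ((a - b) + r * d) * ((a ^ 2 - b ^ 2) / 2) - (3 / 2 * d ^ 2 - 1 / 2 * (a - b) ^ 2) ≤
      (1 / 2 + M + (R * M) ^ 2 / 6) * (r * (a - b) ^ 2) := by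
  set A := (a + b) / 2
  have hA : |A| ≤ M := by
    rw [abs_le] at ha hb ⊢
    constructor <;> simp only [A] <;> linarith
  have hr0 : 0 < r := one_pos.trans_le hr
  have hR : 0 ≤ R := hr0.le.trans hrR
  have hrA : (r * A) ^ 2 ≤ (R * M) ^ 2 := by
    rw [← sq_abs, abs_mul, abs_of_pos hr0]
    gcongr
  calc ((a - b) + r * d) * ((a ^ 2 - b ^ 2) / 2) - (3 / 2 * d ^ 2 - 1 / 2 * (a - b) ^ 2)
      = (1 / 2 + A + (r * A) ^ 2 / 6) * (a - b) ^ 2 - (3 * d - r * A * (a - b)) ^ 2 / 6 := by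
        simp only [A]; ring
    _ ≤ (1 / 2 + A + (r * A) ^ 2 / 6) * (a - b) ^ 2 := sub_le_self _ (by positivity)
    _ ≤ (1 / 2 + M + (R * M) ^ 2 / 6) * (1 * (a - b) ^ 2) := by
        rw [one_mul]
        gcongr
        exact (le_abs_self A).trans hA
    _ ≤ (1 / 2 + M + (R * M) ^ 2 / 6) * (r * (a - b) ^ 2) := by
        have hM := (abs_nonneg a).trans ha
        gcongr

/-- The time derivative `y_t` that the KdV equation prescribes at a state `f` with first and third
space derivatives `f₁` and `f₃`. -/
def kdvVelocity (f f₁ f₃ : ℝ → ℝ) (x : ℝ) : ℝ := -(f₁ x + f x * f₁ x + f₃ x)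

lemma HasThreeDerivs.continuousOn_kdvVelocity (hf : HasThreeDerivs L f f₁ f₂ f₃) :
    ContinuousOn (kdvVelocity f f₁ f₃) (Icc 0 L) :=
  ((hf.continuousOn₁.add (hf.continuousOn.mul hf.continuousOn₁)).add hf.continuousOn₃).neg

lemma IsKdVProfile.integral_weight_mul_kdvVelocity_sub_le {M : ℝ} (hL : 0 ≤ L)
    (hf : IsKdVProfile L f f₁ f₂ f₃) (hg : IsKdVProfile L g g₁ g₂ g₃)
    (hfM : ∀ x ∈ Icc 0 L, |f x| ≤ M) (hgM : ∀ x ∈ Icc 0 L, |g x| ≤ M) :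
    ∫ x in (0 : ℝ)..L,
        (1 + x) * ((f x - g x) * (kdvVelocity f f₁ f₃ x - kdvVelocity g g₁ g₃ x)) ≤
      (1 / 2 + M + ((1 + L) * M) ^ 2 / 6) * ∫ x in (0 : ℝ)..L, (1 + x) * (f x - g x) ^ 2 := by
  have hlinear := (hf.sub hg).integral_weight_mul_linear hL
  have hconvection := hf.integral_weight_mul_convection_sub hL hg
  obtain ⟨⟨hfc, hfc₁, -, hfc₃, -, -, -⟩, -, -, -⟩ := hf
  obtain ⟨⟨hgc, hgc₁, -, hgc₃, -, -, -⟩, -, -, -⟩ := hg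
  simp only [Pi.sub_apply] at hlinear
  have hint {k : ℝ → ℝ} (hk : ContinuousOn k (Icc 0 L)) : IntervalIntegrable k volume 0 L :=
    hk.intervalIntegrable_of_Icc hL
  calc ∫ x in (0 : ℝ)..L,
        (1 + x) * ((f x - g x) * (kdvVelocity f f₁ f₃ x - kdvVelocity g g₁ g₃ x))
      = -(∫ x in (0 : ℝ)..L, (1 + x) * ((f x - g x) * (f₁ x - g₁ x + (f₃ x - g₃ x)))) -
          ∫ x in (0 : ℝ)..L, (1 + x) * ((f x - g x) * (f x * f₁ x - g x * g₁ x)) := by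
        rw [← intervalIntegral.integral_neg, ← intervalIntegral.integral_sub
          (hint (by fun_prop)) (hint (by fun_prop))]
        simp only [kdvVelocity]
        congr! 2
        ring
    _ ≤ (∫ x in (0 : ℝ)..L,
          ((f x - g x) + (1 + x) * (f₁ x - g₁ x)) * ((f x ^ 2 - g x ^ 2) / 2)) -
          ∫ x in (0 : ℝ)..L, (3 / 2 * (f₁ x - g₁ x) ^ 2 - 1 / 2 * (f x - g x) ^ 2) := by
        rw [hlinear, hconvection, intervalIntegral.integral_neg]
        linarith [sq_nonneg (f₁ 0 - g₁ 0)]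
    _ ≤ (1 / 2 + M + ((1 + L) * M) ^ 2 / 6) * ∫ x in (0 : ℝ)..L, (1 + x) * (f x - g x) ^ 2 := by
        rw [← intervalIntegral.integral_sub (hint (by fun_prop)) (hint (by fun_prop)),
          ← intervalIntegral.integral_const_mul]
        exact intervalIntegral.integral_mono_on hL (hint (by fun_prop)) (hint (by fun_prop))
          fun x hx => weighted_convection_sub_gain_le (hfM x hx) (hgM x hx)
            (le_add_of_nonneg_right hx.1) (by gcongr; exact hx.2)

lemma IsKdVProfile.integral_kdvVelocity_mul {φ φ₁ φ₂ φ₃ : ℝ → ℝ} (hL : 0 ≤ L)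
    (hf : IsKdVProfile L f f₁ f₂ f₃) (hφ : HasThreeDerivs L φ φ₁ φ₂ φ₃) (hφ0 : φ 0 = 0)
    (hφL : φ L = 0) (hφ₁ : φ₁ 0 = 0) :
    ∫ x in (0 : ℝ)..L, kdvVelocity f f₁ f₃ x * φ x =
      ∫ x in (0 : ℝ)..L, (f x * (φ₁ x + φ₃ x) + 1 / 2 * (f x ^ 2 * φ₁ x)) := by
  have hvelocity := hf.continuousOn_kdvVelocity
  obtain ⟨⟨hc, hc₁, hc₂, -, hd, hd₁, hd₂⟩, h0, hfL, hf₁L⟩ := hf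
  obtain ⟨hcφ, hcφ₁, hcφ₂, hcφ₃, hdφ, hdφ₁, hdφ₂⟩ := hφ
  rw [integral_eq_integral_add_of_hasDerivAt_sub hL (by fun_prop) (by fun_prop)
    (F := fun x => f₁ x * φ₁ x - f x * φ₂ x - (f₂ x + f x + f x ^ 2 / 2) * φ x)
    (m := fun x => f x * (φ₁ x + φ₃ x) + 1 / 2 * (f x ^ 2 * φ₁ x)) (by fun_prop) fun x hx => ?_]
  · simp only [h0, hfL, hf₁L, hφ0, hφL, hφ₁]
    ring
  · have hflux := ((hd₂ x hx).fun_add (hd x hx)).fun_add (((hd x hx).fun_pow 2).div_const 2)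
    refine ((((hd₁ x hx).fun_mul (hdφ₁ x hx)).fun_sub ((hd x hx).fun_mul (hdφ₂ x hx))).fun_sub
      (hflux.fun_mul (hdφ x hx))).congr_deriv ?_
    simp only [kdvVelocity]
    push_cast
    ring

end Profile

section Flow

/-- The measure `(1 + x) dx` on `(0, L)`. The `L²` distance it defines between two solutions of the
KdV system grows at most exponentially. -/
noncomputable def weightedMeasure (L : ℝ) : Measure ℝ :=
  (volume.restrict (Ioo 0 L)).withDensity fun x => ENNReal.ofReal (1 + x)

variable {L M : ℝ} {f g φ : ℝ → ℝ}

instance isFiniteMeasure_weightedMeasure (L : ℝ) : IsFiniteMeasure (weightedMeasure L) :=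
  isFiniteMeasure_withDensity_ofReal <|
    ((continuous_const_add (1 : ℝ)).integrableOn_Icc.mono_set Ioo_subset_Icc_self).2

lemma ae_weightedMeasure_mem_Ioo (L : ℝ) : ∀ᵐ x ∂weightedMeasure L, x ∈ Ioo 0 L :=
  (withDensity_absolutelyContinuous _ _).ae_le (ae_restrict_mem measurableSet_Ioo)

lemma integral_weightedMeasure (hL : 0 ≤ L) (f : ℝ → ℝ) :
    ∫ x, f x ∂weightedMeasure L = ∫ x in (0 : ℝ)..L, (1 + x) * f x := by
  have hdensity : Measurable fun x : ℝ => (1 + x).toNNReal := by fun_prop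
  rw [intervalIntegral.integral_of_le hL, integral_Ioc_eq_integral_Ioo]
  refine (integral_withDensity_eq_integral_smul hdensity f).trans
    (setIntegral_congr_fun measurableSet_Ioo fun x hx => ?_)
  have hx1 : 0 ≤ 1 + x := by linarith [hx.1]
  simp only [NNReal.smul_def, smul_eq_mul, Real.coe_toNNReal _ hx1]

lemma memLp_weightedMeasure {p : ENNReal} (hf : ContinuousOn f (Icc 0 L)) :
    MemLp f p (weightedMeasure L) := by
  obtain ⟨M, hM⟩ := isCompact_Icc.exists_bound_of_continuousOn hf
  refine MemLp.of_bound ?_ M ?_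
  · exact ((hf.mono Ioo_subset_Icc_self).aestronglyMeasurable measurableSet_Ioo).mono_ac
      (withDensity_absolutelyContinuous _ _)
  · filter_upwards [ae_weightedMeasure_mem_Ioo L] with x hx using hM x (Ioo_subset_Icc_self hx)

lemma inner_toLp_div_weight (hL : 0 ≤ L)
    (hφ : MemLp (fun x => φ x / (1 + x)) 2 (weightedMeasure L))
    (hf : MemLp f 2 (weightedMeasure L)) :
    ⟪hφ.toLp, hf.toLp⟫ = ∫ x in (0 : ℝ)..L, f x * φ x := by
  rw [inner_toLp_toLp, integral_weightedMeasure hL]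
  refine intervalIntegral.integral_congr fun x hx => ?_
  rw [uIcc_of_le hL] at hx
  have hx1 : 1 + x ≠ 0 := by linarith [hx.1]
  field_simp

lemma inner_toLp_kdvVelocity_sub_le {f₁ f₂ f₃ g₁ g₂ g₃ : ℝ → ℝ} (hL : 0 ≤ L)
    (hf : IsKdVProfile L f f₁ f₂ f₃) (hg : IsKdVProfile L g g₁ g₂ g₃)
    (hfM : ∀ x ∈ Icc 0 L, |f x| ≤ M) (hgM : ∀ x ∈ Icc 0 L, |g x| ≤ M)
    (hfLp : MemLp f 2 (weightedMeasure L)) (hgLp : MemLp g 2 (weightedMeasure L))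
    (hfLp' : MemLp (kdvVelocity f f₁ f₃) 2 (weightedMeasure L))
    (hgLp' : MemLp (kdvVelocity g g₁ g₃) 2 (weightedMeasure L)) :
    ⟪hfLp.toLp - hgLp.toLp, hfLp'.toLp - hgLp'.toLp⟫ ≤
      (1 / 2 + M + ((1 + L) * M) ^ 2 / 6) * ‖hfLp.toLp - hgLp.toLp‖ ^ 2 := by
  rw [← MemLp.toLp_sub, ← MemLp.toLp_sub, inner_toLp_toLp, norm_toLp_sq,
    integral_weightedMeasure hL, integral_weightedMeasure hL]
  exact hf.integral_weight_mul_kdvVelocity_sub_le hL hg hfM hgM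

theorem hasDerivAt_integral_mul_of_kdv {I : Set ℝ} {u u₁ u₂ u₃ : ℝ → ℝ → ℝ} (hL : 0 ≤ L)
    (hI : IsOpen I) (hu : ∀ t, IsKdVProfile L (u t) (u₁ t) (u₂ t) (u₃ t))
    (hM : ∀ t, ∀ x ∈ Icc 0 L, |u t x| ≤ M)
    (hderiv : ∀ x ∈ Ioo 0 L, ∀ t ∈ I,
      HasDerivAt (fun s => u s x) (kdvVelocity (u t) (u₁ t) (u₃ t) x) t)
    (hcont : ∀ x ∈ Ioo 0 L, ContinuousOn (fun t => kdvVelocity (u t) (u₁ t) (u₃ t) x) I)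
    (hφ : ContinuousOn φ (Icc 0 L)) : ∀ t ∈ I,
      HasDerivAt (fun s => ∫ x in (0 : ℝ)..L, u s x * φ x)
        (∫ x in (0 : ℝ)..L, kdvVelocity (u t) (u₁ t) (u₃ t) x * φ x) t := by
  have hmem := ae_weightedMeasure_mem_Ioo L
  have huLp t : MemLp (u t) 2 (weightedMeasure L) := memLp_weightedMeasure (hu t).continuousOn
  have hvLp t : MemLp (kdvVelocity (u t) (u₁ t) (u₃ t)) 2 (weightedMeasure L) :=
    memLp_weightedMeasure (hu t).continuousOn_kdvVelocity
  have hψLp : MemLp (fun x => φ x / (1 + x)) 2 (weightedMeasure L) :=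
    memLp_weightedMeasure <| hφ.div (by fun_prop) fun x hx => by linarith [hx.1]
  have hM0 : 0 ≤ M := (abs_nonneg _).trans (hM 0 0 (left_mem_Icc.2 hL))
  have hucont : ContinuousOn (fun t => (huLp t).toLp) I :=
    continuousOn_toLp_of_bounded huLp
      (fun t => hmem.mono fun x hx => hM t x (Ioo_subset_Icc_self hx))
      (hmem.mono fun x hx t ht => (hderiv x hx t ht).continuousAt.continuousWithinAt)
  intro t ht
  have hweak := hasWeakDerivAt_toLp_of_dissipative huLp hvLp hI
    (by positivity : 0 ≤ 1 / 2 + M + ((1 + L) * M) ^ 2 / 6)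
    (hmem.mono hderiv) (hmem.mono hcont) hucont
    (fun s _ t _ => inner_toLp_kdvVelocity_sub_le hL (hu t) (hu s) (hM t) (hM s) _ _ _ _) t ht
  simpa only [inner_toLp_div_weight hL hψLp] using hweak.hasDerivAt_inner hψLp.toLp

end Flow

namespace IsNonlinearKdVSol

variable {L T t x : ℝ} {y : ℝ → ℝ → ℝ}

lemma isKdVProfile (hL : 0 < L) (hy : IsNonlinearKdVSol L T y) (ht : t ∈ Icc 0 T) :
    IsKdVProfile L (y t) (derivWithin (y t) (Icc 0 L)) (iteratedDerivWithin 2 (y t) (Icc 0 L))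
      (iteratedDerivWithin 3 (y t) (Icc 0 L)) where
  toHasThreeDerivs := hasThreeDerivs_of_contDiffOn hL (hy.1 t ht)
  apply_zero := (hy.2.2.2.2 t ht).1
  apply_right := (hy.2.2.2.2 t ht).2.1
  deriv_right := (hy.2.2.2.2 t ht).2.2

lemma kdvVelocity_eq_derivWithin (hy : IsNonlinearKdVSol L T y) (ht : t ∈ Ioo 0 T)
    (hx : x ∈ Ioo 0 L) :
    kdvVelocity (y t) (derivWithin (y t) (Icc 0 L)) (iteratedDerivWithin 3 (y t) (Icc 0 L)) x =
      derivWithin (fun s => y s x) (Icc 0 T) t := by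
  simp only [kdvVelocity]
  linarith [hy.2.2.2.1 t ht x hx]

lemma continuousOn_kdvVelocity (hT : 0 < T) (hy : IsNonlinearKdVSol L T y) (hx : x ∈ Ioo 0 L) :
    ContinuousOn (fun t => kdvVelocity (y t) (derivWithin (y t) (Icc 0 L))
      (iteratedDerivWithin 3 (y t) (Icc 0 L)) x) (Ioo 0 T) :=
  (((hy.2.1 x (Ioo_subset_Icc_self hx)).continuousOn_derivWithin (uniqueDiffOn_Icc hT)
    le_rfl).mono Ioo_subset_Icc_self).congr fun _ ht => hy.kdvVelocity_eq_derivWithin ht hx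

lemma hasDerivAt_time (hy : IsNonlinearKdVSol L T y) (ht : t ∈ Ioo 0 T) (hx : x ∈ Ioo 0 L) :
    HasDerivAt (fun s => y s x) (kdvVelocity (y t) (derivWithin (y t) (Icc 0 L))
      (iteratedDerivWithin 3 (y t) (Icc 0 L)) x) t := by
  rw [hy.kdvVelocity_eq_derivWithin ht hx]
  exact ((hy.2.1 x (Ioo_subset_Icc_self hx)).differentiableOn one_ne_zero t
    (Ioo_subset_Icc_self ht)).hasDerivWithinAt.hasDerivAt (Icc_mem_nhds ht.1 ht.2)

theorem hasDerivAt_integral_mul {φ : ℝ → ℝ} (hL : 0 < L) (hy : IsNonlinearKdVSol L T y)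
    (hφ : ContinuousOn φ (Icc 0 L)) (ht : t ∈ Ioo 0 T) :
    HasDerivAt (fun s => ∫ x in (0 : ℝ)..L, y s x * φ x)
      (∫ x in (0 : ℝ)..L, kdvVelocity (y t) (derivWithin (y t) (Icc 0 L))
        (iteratedDerivWithin 3 (y t) (Icc 0 L)) x * φ x) t := by
  have hT : 0 < T := ht.1.trans ht.2
  obtain ⟨M, hM⟩ := (isCompact_Icc.prod isCompact_Icc).exists_bound_of_continuousOn hy.2.2.1
  set clamp : ℝ → ℝ := fun s => projIcc 0 T hT.le s
  have hclamp s : clamp s ∈ Icc 0 T := (projIcc 0 T hT.le s).2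
  have hclamp_eq {s : ℝ} (hs : s ∈ Ioo 0 T) : clamp s = s := by
    simp only [clamp, projIcc_of_mem hT.le (Ioo_subset_Icc_self hs)]
  have hclamp_eventually {s : ℝ} (hs : s ∈ Ioo 0 T) : ∀ᶠ r in 𝓝 s, clamp r = r :=
    (isOpen_Ioo.eventually_mem hs).mono fun r hr => hclamp_eq hr
  have hclamped := hasDerivAt_integral_mul_of_kdv hL.le isOpen_Ioo
    (fun s => hy.isKdVProfile hL (hclamp s)) (fun s x hx => hM (clamp s, x) ⟨hclamp s, hx⟩)
    (fun x hx s hs => ?_) (fun x hx => ?_) hφ t ht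
  · rw [hclamp_eq ht] at hclamped
    refine hclamped.congr_of_eventuallyEq ((hclamp_eventually ht).mono fun s hs => ?_)
    simp only [hs]
  · rw [hclamp_eq hs]
    refine (hy.hasDerivAt_time hs hx).congr_of_eventuallyEq ((hclamp_eventually hs).mono ?_)
    intro r hr
    simp only [hr]
  · refine (hy.continuousOn_kdvVelocity hT hx).congr fun s hs => ?_
    simp only [hclamp_eq hs]

end IsNonlinearKdVSol

section Kernel

lemma hasDerivAt_phiKdV (x : ℝ) : HasDerivAt phiKdV (Real.sin x / √(3 * π)) x :=
  (((Real.hasDerivAt_cos x).const_sub 1).div_const (√(3 * π))).congr_deriv (by rw [neg_neg])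

lemma hasThreeDerivs_phiKdV {L : ℝ} : HasThreeDerivs L phiKdV
    (fun x => Real.sin x / √(3 * π)) (fun x => Real.cos x / √(3 * π))
    (fun x => -Real.sin x / √(3 * π)) where
  continuousOn x _ := (hasDerivAt_phiKdV x).continuousAt.continuousWithinAt
  continuousOn₁ := by fun_prop
  continuousOn₂ := by fun_prop
  continuousOn₃ := by fun_prop
  hasDerivAt x _ := hasDerivAt_phiKdV x
  hasDerivAt₁ x _ := (Real.hasDerivAt_sin x).div_const _
  hasDerivAt₂ x _ := (Real.hasDerivAt_cos x).div_const _

lemma IsKdVProfile.integral_kdvVelocity_mul_phiKdV {f f₁ f₂ f₃ : ℝ → ℝ}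
    (hf : IsKdVProfile (2 * π) f f₁ f₂ f₃) :
    ∫ x in (0 : ℝ)..2 * π, kdvVelocity f f₁ f₃ x * phiKdV x =
      1 / 2 * ∫ x in (0 : ℝ)..2 * π, f x ^ 2 * deriv phiKdV x := by
  rw [hf.integral_kdvVelocity_mul two_pi_pos.le hasThreeDerivs_phiKdV (by simp [phiKdV])
    (by simp [phiKdV]) (by simp), ← intervalIntegral.integral_const_mul]
  simp only [(hasDerivAt_phiKdV _).deriv]
  congr! 2
  ring

end Kernel

/-- for a classical solution `y` of the nonlinear KdV system at the
critical length `L = 2π`, the projection coordinate `p(t) = ∫₀^{2π} y(t,x) φ(x) dx`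
is differentiable on `(0,T)` with `p′(t) = (1/2) ∫₀^{2π} y(t,x)² φ′(x) dx`. -/
theorem kdv_projection_derivative (T : ℝ) (hT : 0 < T)
    (y : ℝ → ℝ → ℝ) (hy : IsNonlinearKdVSol (2 * Real.pi) T y) :
    ∀ t ∈ Ioo (0:ℝ) T,
      HasDerivWithinAt (fun s => ∫ x in (0:ℝ)..(2 * Real.pi), y s x * phiKdV x)
        ((1/2 : ℝ) * ∫ x in (0:ℝ)..(2 * Real.pi), (y t x) ^ 2 * deriv phiKdV x)
        (Icc (0:ℝ) T) t := by
  intro t ht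
  have hprofile := hy.isKdVProfile two_pi_pos (Ioo_subset_Icc_self ht)
  rw [← hprofile.integral_kdvVelocity_mul_phiKdV]
  exact (hy.hasDerivAt_integral_mul two_pi_pos hasThreeDerivs_phiKdV.continuousOn
    ht).hasDerivWithinAt
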